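/- If a feasible point x̄ of the MPVC is A_α-stationary for every α ∈ {0,1}^p, then x̄ is C_d-stationary for every d ∈ [0,1]^p and P_α-stationary for every α ∈ {0,1}^p. -/

import Mathlib

/-!
The set of weak multipliers is convex, and for every vertex `α` of the cube `[0,1]^p` it contains a
multiplier `z α` witnessing `A_α`-stationarity. Interpolating the `z α` multilinearly gives a
continuous family `Z t` of weak multipliers over the cube. For a biactive index `i` put
`F_i(t) = min (μ_i, (1 - d_i) μ_i + d_i ν_i)` evaluated at `Z t`. On the face `t_i = 0` one has
`μ_i = 0`, so `F_i ≤ 0`; on the face `t_i = 1` both `μ_i, ν_i ≥ 0`, so `F_i ≥ 0`. The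
Poincaré–Miranda theorem (`poincare_miranda`) gives a common zero of all `F_i`, and `F_i = 0` is
exactly what `C_d`-stationarity needs (`cStat_of_forall_aStat`). `P_α`-stationarity is the special
case `d = α`.

Poincaré–Miranda is deduced from Brouwer's fixed point theorem (`exists_fixedPoint`), which is
proved by the volume argument of Milnor and Rogers: a `C¹` map `r` that is the identity on the
sphere satisfies `∫ det Dr = vol` over the ball, because the integral of `det (id + t (Dr - id))`
is polynomial in `t` and equals the volume for small `t`, when `id + t (r - id)` is a
diffeomorphism of the ball. A `C¹` retraction onto the sphere has singular derivative, hence cannot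
exist.
-/

open Set Filter RealInnerProductSpace

noncomputable section

abbrev Rn (n : ℕ) := EuclideanSpace ℝ (Fin n)

/-- The tangent cone (Bouligand) to a set `F` at a point `x`. -/
def tangentCone' {n : ℕ} (F : Set (Rn n)) (x : Rn n) : Set (Rn n) :=
  {d | ∃ (xk : ℕ → Rn n) (tk : ℕ → ℝ),
    (∀ k, xk k ∈ F) ∧ (∀ k, 0 < tk k) ∧
    Tendsto xk atTop (nhds x) ∧ Tendsto tk atTop (nhds 0) ∧
    Tendsto (fun k => (tk k)⁻¹ • (xk k - x)) atTop (nhds d)}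

/-- The polar cone of a set. -/
def polarCone {n : ℕ} (C : Set (Rn n)) : Set (Rn n) :=
  {d | ∀ y ∈ C, ⟪d, y⟫ ≤ 0}

/-- α ∈ {0,1}^p -/
def IsBinaryVec {p : ℕ} (α : Fin p → ℝ) : Prop := ∀ i, α i = 0 ∨ α i = 1

/-- d ∈ [0,1]^p -/
def IsUnitIntervalVec {p : ℕ} (d : Fin p → ℝ) : Prop := ∀ i, d i ∈ Set.Icc (0:ℝ) 1

variable {n l m p : ℕ}

/-- The feasible set of the MPVC. -/
def MpvcFeasible (g : Fin l → Rn n → ℝ) (h : Fin m → Rn n → ℝ)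
    (G H : Fin p → Rn n → ℝ) : Set (Rn n) :=
  {x | (∀ i, g i x ≤ 0) ∧ (∀ i, h i x = 0) ∧ (∀ i, 0 ≤ H i x) ∧
    (∀ i, G i x * H i x ≤ 0)}

/-- The MPVC-linearized tangent cone at xb. -/
def MpvcLinCone (g : Fin l → Rn n → ℝ) (h : Fin m → Rn n → ℝ)
    (G H : Fin p → Rn n → ℝ) (xb : Rn n) : Set (Rn n) :=
  {d | (∀ i, g i xb = 0 → ⟪gradient (g i) xb, d⟫ ≤ 0) ∧
    (∀ i, ⟪gradient (h i) xb, d⟫ = 0) ∧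
    (∀ i, G i xb = 0 → 0 < H i xb → ⟪gradient (G i) xb, d⟫ ≤ 0) ∧
    (∀ i, 0 < G i xb → H i xb = 0 → ⟪gradient (H i) xb, d⟫ = 0) ∧
    (∀ i, (G i xb = 0 ∧ H i xb = 0) ∨ (G i xb < 0 ∧ H i xb = 0) →
      0 ≤ ⟪gradient (H i) xb, d⟫) ∧
    (∀ i, G i xb = 0 → H i xb = 0 →
      ⟪gradient (G i) xb, d⟫ * ⟪gradient (H i) xb, d⟫ ≤ 0)}

/-- The weak stationarity system of the MPVC for given multipliers. -/
def MpvcWeakMult (f : Rn n → ℝ) (g : Fin l → Rn n → ℝ) (h : Fin m → Rn n → ℝ)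
    (G H : Fin p → Rn n → ℝ) (xb : Rn n)
    (lam : Fin l → ℝ) (eta : Fin m → ℝ) (mu nu : Fin p → ℝ) : Prop :=
  gradient f xb + ∑ i, lam i • gradient (g i) xb + ∑ i, eta i • gradient (h i) xb
    + ∑ i, mu i • gradient (G i) xb - ∑ i, nu i • gradient (H i) xb = 0 ∧
  (∀ i, g i xb = 0 → 0 ≤ lam i) ∧ (∀ i, g i xb ≠ 0 → lam i = 0) ∧
  (∀ i, (0 < G i xb ∧ H i xb = 0) ∨ (G i xb < 0 ∧ H i xb = 0) ∨
    (G i xb < 0 ∧ 0 < H i xb) → mu i = 0) ∧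
  (∀ i, (G i xb = 0 ∧ 0 < H i xb) ∨ (G i xb = 0 ∧ H i xb = 0) → 0 ≤ mu i) ∧
  (∀ i, (G i xb = 0 ∧ 0 < H i xb) ∨ (G i xb < 0 ∧ 0 < H i xb) → nu i = 0) ∧
  (∀ i, G i xb < 0 → H i xb = 0 → 0 ≤ nu i)

/-- A_α-stationarity for the MPVC. -/
def MpvcAStat (f : Rn n → ℝ) (g : Fin l → Rn n → ℝ) (h : Fin m → Rn n → ℝ)
    (G H : Fin p → Rn n → ℝ) (xb : Rn n) (α : Fin p → ℝ) : Prop :=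
  ∃ lam eta mu nu, MpvcWeakMult f g h G H xb lam eta mu nu ∧
    (∀ i, G i xb = 0 → H i xb = 0 → α i = 0 → mu i = 0) ∧
    (∀ i, G i xb = 0 → H i xb = 0 → α i = 1 → 0 ≤ nu i)

/-- P_α-stationarity for the MPVC. -/
def MpvcPStat (f : Rn n → ℝ) (g : Fin l → Rn n → ℝ) (h : Fin m → Rn n → ℝ)
    (G H : Fin p → Rn n → ℝ) (xb : Rn n) (α : Fin p → ℝ) : Prop :=
  ∃ lam eta mu nu, MpvcWeakMult f g h G H xb lam eta mu nu ∧
    (∀ i, G i xb = 0 → H i xb = 0 → α i = 0 → mu i = 0) ∧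
    (∀ i, G i xb = 0 → H i xb = 0 → α i = 1 →
      (mu i = 0 ∧ 0 ≤ nu i) ∨ nu i = 0)

/-- C_d-stationarity for the MPVC. -/
def MpvcCStat (f : Rn n → ℝ) (g : Fin l → Rn n → ℝ) (h : Fin m → Rn n → ℝ)
    (G H : Fin p → Rn n → ℝ) (xb : Rn n) (d : Fin p → ℝ) : Prop :=
  ∃ lam eta mu nu, MpvcWeakMult f g h G H xb lam eta mu nu ∧
    (∀ i, G i xb = 0 → H i xb = 0 →
      (mu i = 0 ∧ 0 ≤ nu i) ∨ (1 - d i) * mu i = -(d i * nu i))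

/-- M-stationarity for the MPVC. -/
def MpvcMStat (f : Rn n → ℝ) (g : Fin l → Rn n → ℝ) (h : Fin m → Rn n → ℝ)
    (G H : Fin p → Rn n → ℝ) (xb : Rn n) : Prop :=
  ∃ lam eta mu nu, MpvcWeakMult f g h G H xb lam eta mu nu ∧
    (∀ i, G i xb = 0 → H i xb = 0 → mu i * nu i = 0)

/-- The feasible set of the branch problem NLP(0) associated with xb. -/
def MpvcNlp0Feasible (g : Fin l → Rn n → ℝ) (h : Fin m → Rn n → ℝ)
    (G H : Fin p → Rn n → ℝ) (xb : Rn n) : Set (Rn n) :=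
  {x | (∀ i, g i x ≤ 0) ∧ (∀ i, h i x = 0) ∧
    (∀ i, (0 < G i xb ∧ H i xb = 0) ∨ (G i xb = 0 ∧ H i xb = 0) → H i x = 0) ∧
    (∀ i, (G i xb < 0 ∧ H i xb = 0) ∨ (G i xb < 0 ∧ 0 < H i xb) ∨
      (G i xb = 0 ∧ 0 < H i xb) → G i x ≤ 0 ∧ 0 ≤ H i x)}

/-- The standard linearization cone of NLP(0) at xb. -/
def MpvcNlp0LinCone (g : Fin l → Rn n → ℝ) (h : Fin m → Rn n → ℝ)
    (G H : Fin p → Rn n → ℝ) (xb : Rn n) : Set (Rn n) :=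
  {d | (∀ i, g i xb = 0 → ⟪gradient (g i) xb, d⟫ ≤ 0) ∧
    (∀ i, ⟪gradient (h i) xb, d⟫ = 0) ∧
    (∀ i, (0 < G i xb ∧ H i xb = 0) ∨ (G i xb = 0 ∧ H i xb = 0) →
      ⟪gradient (H i) xb, d⟫ = 0) ∧
    (∀ i, G i xb = 0 → 0 < H i xb → ⟪gradient (G i) xb, d⟫ ≤ 0) ∧
    (∀ i, G i xb < 0 → H i xb = 0 → 0 ≤ ⟪gradient (H i) xb, d⟫)}
/-! ### Brouwer's fixed point theorem -/

section Brouwer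
open MeasureTheory Metric Polynomial

variable {E : Type*} [NormedAddCommGroup E] [InnerProductSpace ℝ E] [FiniteDimensional ℝ E]

/-- As `det (id + t A)` is a polynomial in `t` of degree at most `dim E`, its value at `t = 1` is a
fixed linear combination of its values at finitely many nodes in `[0, ε]`. -/
lemma exists_det_quadrature {ε : ℝ} (hε : 0 < ε) :
    ∃ (N : ℕ) (w τ : Fin N → ℝ), (∀ k, 0 ≤ τ k ∧ τ k ≤ ε) ∧
      ∀ A : E →L[ℝ] E,
        (ContinuousLinearMap.id ℝ E + A).det
          = ∑ k, w k * (ContinuousLinearMap.id ℝ E + τ k • A).det := by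
  classical
  set d := Module.finrank ℝ E with hd
  let b := Module.finBasis ℝ E
  let τ : Fin (d + 1) → ℝ := fun k => ε * (k / (d + 1))
  have hτ : Function.Injective τ := by
    intro i j hij
    have h1 : (i : ℝ) / (d + 1) = j / (d + 1) := mul_left_cancel₀ hε.ne' hij
    have h2 : (i : ℝ) = j := by
      have : (d + 1 : ℝ) ≠ 0 := by positivity
      field_simp at h1
      exact h1
    exact Fin.ext (by exact_mod_cast h2)
  refine ⟨d + 1, fun k => (Lagrange.basis Finset.univ τ k).eval 1, τ, fun k => ⟨by positivity, ?_⟩,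
    fun A => ?_⟩
  · have h1 : (k : ℝ) / (d + 1) ≤ 1 := by
      rw [div_le_one (by positivity)]
      exact_mod_cast k.2.le
    nlinarith
  · let M := LinearMap.toMatrix b b (A : E →ₗ[ℝ] E)
    let P : ℝ[X] := ((X : ℝ[X]) • M.map C + (1 : Matrix _ _ ℝ).map C).det
    have hP : ∀ t : ℝ, P.eval t = (ContinuousLinearMap.id ℝ E + t • A).det := by
      intro t
      have h1 : (ContinuousLinearMap.id ℝ E + t • A).det = (1 + t • M).det := by
        rw [ContinuousLinearMap.det, ← LinearMap.det_toMatrix b]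
        congr 1
        simp [M, map_add]
      rw [h1]
      have h2 := RingHom.map_det (Polynomial.evalRingHom t)
        ((X : ℝ[X]) • M.map C + (1 : Matrix _ _ ℝ).map C)
      rw [Polynomial.coe_evalRingHom] at h2
      rw [h2]
      congr 1
      ext i j
      by_cases hij : i = j
      · simp [hij]
        ring
      · simp [hij]
        ring
    have hdeg : P.degree < (Finset.univ : Finset (Fin (d + 1))).card := by
      refine lt_of_le_of_lt Polynomial.degree_le_natDegree ?_
      have h3 : P.natDegree ≤ d := by
        simpa [P] using Polynomial.natDegree_det_X_add_C_le M 1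
      simp only [Finset.card_univ, Fintype.card_fin]
      exact_mod_cast Nat.lt_succ_of_le h3
    have h4 := congrArg (Polynomial.eval 1) (Lagrange.eq_interpolate (hτ.injOn) hdeg)
    rw [Lagrange.interpolate_apply, Polynomial.eval_finsetSum, hP, one_smul] at h4
    rw [h4]
    refine Finset.sum_congr rfl fun k _ => ?_
    simp [hP, mul_comm]

/-- A small Lipschitz perturbation of the identity that vanishes on the sphere permutes the ball:
extended by the identity outside the ball it is a bijection of the whole space. -/
lemma bijOn_closedBall_of_small {M : ℝ} {h : E → E} {K : NNReal}
    (hK : LipschitzOnWith K h (closedBall 0 M)) (h0 : ∀ x, ‖x‖ = M → h x = 0)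
    {t : ℝ} (ht0 : 0 ≤ t) (ht : t * K < 1) :
    BijOn (fun x => x + t • h x) (closedBall 0 M) (closedBall 0 M) := by
  classical
  let h' : E → E := fun x => if ‖x‖ ≤ M then h x else 0
  have key : ∀ x y, ‖x‖ ≤ M → M < ‖y‖ → ‖h x‖ ≤ K * ‖x - y‖ := by
    intro x y hx hy
    -- compare `x` with a point where the segment from `x` to `y` crosses the sphere
    have hc : ContinuousOn (fun s : ℝ => ‖AffineMap.lineMap x y s‖) (Icc 0 1) := by
      apply Continuous.continuousOn
      fun_prop
    obtain ⟨s, hs, hsM⟩ := intermediate_value_Icc (zero_le_one' ℝ) hc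
      (show M ∈ Icc _ _ by simp [hx, hy.le])
    have h1 := hK.dist_le_mul x (by simpa using hx) (AffineMap.lineMap x y s)
      (by simpa using hsM.le)
    rw [h0 _ hsM, dist_zero_right, dist_left_lineMap, dist_eq_norm, Real.norm_of_nonneg hs.1] at h1
    refine h1.trans ?_
    have : s * ‖x - y‖ ≤ ‖x - y‖ := mul_le_of_le_one_left (norm_nonneg _) hs.2
    gcongr
  have hL : LipschitzWith K h' := by
    refine LipschitzWith.of_dist_le_mul fun x y => ?_
    rw [dist_eq_norm, dist_eq_norm]
    by_cases hx : ‖x‖ ≤ M <;> by_cases hy : ‖y‖ ≤ M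
    · simpa [h', hx, hy, dist_eq_norm] using
        hK.dist_le_mul x (by simpa using hx) y (by simpa using hy)
    · simpa [h', hx, hy] using key x y hx (not_le.1 hy)
    · rw [norm_sub_rev x y]
      simpa [h', hx, hy] using key y x hy (not_le.1 hx)
    · simp [h', hx, hy]
      positivity
  have happ : ApproximatesLinearOn (fun x => x + t • h' x)
      ((ContinuousLinearEquiv.refl ℝ E : E ≃L[ℝ] E) : E →L[ℝ] E) univ (t.toNNReal * K) := by
    intro x _ y _
    have h1 := hL.dist_le_mul x y
    rw [dist_eq_norm, dist_eq_norm] at h1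
    have h2 : x + t • h' x - (y + t • h' y)
        - ((ContinuousLinearEquiv.refl ℝ E : E ≃L[ℝ] E) : E →L[ℝ] E) (x - y)
        = t • (h' x - h' y) := by
      simp [smul_sub]; abel
    rw [h2, norm_smul, Real.norm_of_nonneg ht0]
    push_cast
    rw [Real.coe_toNNReal _ ht0, mul_assoc]
    gcongr
  have hc : Subsingleton E ∨ t.toNNReal * K
      < ‖((ContinuousLinearEquiv.refl ℝ E : E ≃L[ℝ] E).symm : E →L[ℝ] E)‖₊⁻¹ := by
    rcases subsingleton_or_nontrivial E with hE | hE
    · exact Or.inl hE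
    · right
      have h3 : ‖((ContinuousLinearEquiv.refl ℝ E : E ≃L[ℝ] E).symm : E →L[ℝ] E)‖₊ = 1 := by
        rw [← NNReal.coe_inj, coe_nnnorm]
        simp
      rw [h3, inv_one, ← NNReal.coe_lt_coe]
      push_cast
      rwa [Real.coe_toNNReal _ ht0]
  have hinj : Function.Injective fun x => x + t • h' x :=
    injOn_univ.1 (happ.injOn hc)
  have hsurj := happ.surjective hc
  have hin : ∀ x ∈ closedBall (0 : E) M, x + t • h' x = x + t • h x := by
    intro x hx
    have : ‖x‖ ≤ M := by simpa using hx
    simp [h', this]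
  have hout : ∀ x : E, x ∉ closedBall (0 : E) M → x + t • h' x = x := by
    intro x hx
    have : ¬ ‖x‖ ≤ M := by simpa using hx
    simp [h', this]
  refine ⟨fun x hx => ?_, fun x hx y hy hxy => ?_, fun y hy => ?_⟩
  · by_contra hcon
    change x + t • h x ∉ _ at hcon
    have h4 := hinj ((hout _ hcon).trans (hin x hx).symm)
    rw [h4] at hcon
    exact hcon hx
  · exact hinj ((hin x hx).trans (hxy.trans (hin y hy).symm))
  · obtain ⟨x, hx⟩ := hsurj y
    by_cases hxM : x ∈ closedBall (0 : E) M
    · exact ⟨x, hxM, (hin x hxM).symm.trans hx⟩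
    · exact absurd (by rw [← hx]; simpa only [hout x hxM] using hxM) (not_not.2 hy)

/-- A `C¹` map that is the identity on the sphere preserves the signed volume of the ball. -/
lemma integral_det_fderiv [MeasurableSpace E] [BorelSpace E] {M : ℝ} {r : E → E}
    (hr : ContDiff ℝ 1 r) (hrM : ∀ x, ‖x‖ = M → r x = x) :
    ∫ x in closedBall (0 : E) M, (fderiv ℝ r x).det = volume.real (closedBall (0 : E) M) := by
  let h : E → E := fun x => r x - x
  have hh : ContDiff ℝ 1 h := hr.sub contDiff_id
  have hcont : Continuous (fderiv ℝ h) := hh.continuous_fderiv one_ne_zero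
  obtain ⟨K, hK⟩ := hh.contDiffOn.exists_lipschitzOnWith one_ne_zero
    (convex_closedBall (0 : E) M) (isCompact_closedBall _ _)
  have hdetc : Continuous (fun A : E →L[ℝ] E => A.det) := ContinuousLinearMap.continuous_det
  have hsmall : ∃ ε > (0 : ℝ), ∀ t : ℝ, 0 ≤ t → t ≤ ε → t * K < 1 ∧ ∀ x ∈ closedBall (0 : E) M,
      0 < (ContinuousLinearMap.id ℝ E + t • fderiv ℝ h x).det := by
    have hnear : ∀ᶠ A : E →L[ℝ] E in nhds 0, 0 < (ContinuousLinearMap.id ℝ E + A).det := by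
      have hc : Continuous fun A : E →L[ℝ] E => (ContinuousLinearMap.id ℝ E + A).det :=
        hdetc.comp (by fun_prop)
      refine hc.continuousAt.eventually_const_lt ?_
      simp [ContinuousLinearMap.det]
    obtain ⟨δ, hδ, hδ'⟩ := Metric.eventually_nhds_iff.1 hnear
    obtain ⟨B, hB⟩ := (isCompact_closedBall (0 : E) M).exists_bound_of_continuousOn
      hcont.continuousOn
    refine ⟨min (1 / (K + 1)) (δ / (|B| + 1)), lt_min (by positivity) (by positivity),
      fun t ht0 ht => ⟨?_, fun x hx => hδ' ?_⟩⟩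
    · have h1 : t * (K + 1) ≤ 1 := by
        rw [← le_div_iff₀ (by positivity)]; exact ht.trans (min_le_left _ _)
      rcases ht0.eq_or_lt with h2 | h2
      · rw [← h2]; simp
      · linarith
    · have h1 : t * (|B| + 1) ≤ δ := by
        rw [← le_div_iff₀ (by positivity)]; exact ht.trans (min_le_right _ _)
      rw [dist_zero_right, norm_smul, Real.norm_of_nonneg ht0]
      have h3 := (hB x hx).trans (le_abs_self B)
      rcases ht0.eq_or_lt with h2 | h2
      · rw [← h2]; simpa using hδ
      · nlinarith
  obtain ⟨ε, hε, hsm⟩ := hsmall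
  obtain ⟨N, w, τ, hτ, hq⟩ := exists_det_quadrature (E := E) hε
  have hmeas : MeasurableSet (closedBall (0 : E) M) := isClosed_closedBall.measurableSet
  have hvol : ∀ t : ℝ, 0 ≤ t → t ≤ ε → ∫ x in closedBall (0 : E) M,
      (ContinuousLinearMap.id ℝ E + t • fderiv ℝ h x).det
        = volume.real (closedBall (0 : E) M) := by
    intro t ht0 ht
    have hbij := bijOn_closedBall_of_small hK (fun x hx => by simp [h, hrM x hx]) ht0
      (hsm t ht0 ht).1
    have hder : ∀ x ∈ closedBall (0 : E) M, HasFDerivWithinAt (fun x => x + t • h x)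
        (ContinuousLinearMap.id ℝ E + t • fderiv ℝ h x) (closedBall (0 : E) M) x := by
      intro x _
      exact ((hasFDerivAt_id x).add
        (((hh.differentiable one_ne_zero) x).hasFDerivAt.const_smul t)).hasFDerivWithinAt
    have hcv := integral_image_eq_integral_abs_det_fderiv_smul volume hmeas hder hbij.injOn
      (fun _ => (1 : ℝ))
    rw [hbij.image_eq] at hcv
    simp only [smul_eq_mul, mul_one, integral_const, measureReal_restrict_apply_univ] at hcv
    rw [hcv]
    refine setIntegral_congr_fun hmeas fun x hx => ?_
    exact (abs_of_pos ((hsm t ht0 ht).2 x hx)).symm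
  have hfr : ∀ x, fderiv ℝ r x = ContinuousLinearMap.id ℝ E + fderiv ℝ h x := by
    intro x
    have h1 : HasFDerivAt h (fderiv ℝ r x - ContinuousLinearMap.id ℝ E) x :=
      ((hr.differentiable one_ne_zero) x).hasFDerivAt.sub (hasFDerivAt_id x)
    rw [h1.fderiv]; abel
  -- the quadrature formula at `A = 0`
  have hw : ∑ k, w k = 1 := by
    have := hq 0
    simpa [ContinuousLinearMap.det] using this.symm
  calc ∫ x in closedBall (0 : E) M, (fderiv ℝ r x).det
      = ∫ x in closedBall (0 : E) M,
          ∑ k, w k * (ContinuousLinearMap.id ℝ E + τ k • fderiv ℝ h x).det := by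
        refine integral_congr_ae (Eventually.of_forall fun x => ?_)
        change (fderiv ℝ r x).det = _
        rw [hfr, hq]
    _ = ∑ k, w k * volume.real (closedBall (0 : E) M) := by
        rw [integral_finsetSum]
        · refine Finset.sum_congr rfl fun k _ => ?_
          rw [integral_const_mul, hvol _ (hτ k).1 (hτ k).2]
        · intro k _
          refine ContinuousOn.integrableOn_compact (isCompact_closedBall _ _)
            (Continuous.continuousOn ?_)
          exact continuous_const.mul (hdetc.comp (by fun_prop))
    _ = _ := by rw [← Finset.sum_mul, hw, one_mul]

lemma no_retraction {M : ℝ} (hM : 0 < M) {r : E → E} (hr : ContDiff ℝ 1 r)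
    (hnorm : ∀ x, ‖r x‖ = M) (hrM : ∀ x, ‖x‖ = M → r x = x) : False := by
  borelize E
  have h1 := integral_det_fderiv hr hrM
  have h2 : ∀ x, (fderiv ℝ r x).det = 0 := by
    intro x
    by_contra hdet
    let e := LinearMap.equivOfDetNeZero (fderiv ℝ r x : E →ₗ[ℝ] E) hdet
    obtain ⟨v, hv⟩ := e.surjective (r x)
    -- differentiating `‖r‖² = M²` shows that `r x` is orthogonal to the range of `fderiv ℝ r x`
    have hv' : fderiv ℝ r x v = r x := hv
    have h3 : HasFDerivAt r (fderiv ℝ r x) x := ((hr.differentiable one_ne_zero) x).hasFDerivAt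
    have h4 := h3.norm_sq
    have h5 : (fun y => ‖r y‖ ^ 2) = fun _ => M ^ 2 := by ext y; rw [hnorm]
    rw [h5] at h4
    have h6 := congrArg (fun L : E →L[ℝ] ℝ => L v) (h4.unique (hasFDerivAt_const (M ^ 2) x))
    simp [hv', hnorm] at h6
    exact hM.ne' h6
  simp only [h2, integral_zero] at h1
  have h3 : 0 < volume.real (closedBall (0 : E) M) :=
    ENNReal.toReal_pos (measure_closedBall_pos _ _ hM).ne' measure_closedBall_lt_top.ne
  exact h3.ne h1

/-- Brouwer's fixed point theorem, for a continuous self-map of the whole space with bounded range.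
If `f` had no fixed point, `x - f x` could be cut off to a nowhere vanishing continuous field that
is the identity far from the origin; normalizing a smooth approximation of it yields a retraction
onto a sphere. -/
theorem exists_fixedPoint {R : ℝ} (hR : 0 < R) {f : E → E} (hf : Continuous f)
    (hfR : ∀ x, ‖f x‖ ≤ R) : ∃ x, f x = x := by
  by_contra! hne
  let χ : E → ℝ := fun x => max 0 (min 1 (2 - ‖x‖ / R))
  let F : E → E := fun x => x - χ x • f x
  have hχ0 : ∀ x, 0 ≤ χ x := fun x => le_max_left _ _
  have hχ1 : ∀ x, χ x ≤ 1 := fun x => max_le zero_le_one (min_le_left _ _)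
  have hF : Continuous F := by fun_prop
  have hF0 : ∀ x, F x ≠ 0 := by
    intro x hx
    have hx' : x = χ x • f x := sub_eq_zero.1 hx
    by_cases hxR : ‖x‖ ≤ R
    · have h1 : χ x = 1 := by
        have : ‖x‖ / R ≤ 1 := (div_le_one hR).2 hxR
        simp only [χ]
        rw [min_eq_left (by linarith), max_eq_right zero_le_one]
      rw [h1, one_smul] at hx'
      exact hne x hx'.symm
    · apply hxR
      rw [hx', norm_smul, Real.norm_of_nonneg (hχ0 x)]
      nlinarith [hχ0 x, hχ1 x, hfR x, norm_nonneg (f x)]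
  have hFid : ∀ x, 2 * R ≤ ‖x‖ → F x = x := by
    intro x hx
    have h1 : χ x = 0 := by
      have : 2 ≤ ‖x‖ / R := (le_div_iff₀ hR).2 hx
      exact max_eq_left ((min_le_right _ _).trans (by linarith))
    simp [F, h1]
  let S : Set E := {x | 3 * R ≤ ‖x‖}
  have hS : IsClosed S := isClosed_le continuous_const continuous_norm
  let U : Set E := {x | 2 * R < ‖x‖}
  have hU : IsOpen U := isOpen_lt continuous_const continuous_norm
  have hSU : S ⊆ U := fun x (hx : 3 * R ≤ ‖x‖) => show 2 * R < ‖x‖ by linarith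
  obtain ⟨φ, hφ, happ, hφS, -⟩ := hF.exists_contDiff_approx_and_eqOn 1 hF.norm
    (fun x => norm_pos_iff.2 (hF0 x)) hS (hU.mem_nhdsSet.2 hSU)
    (contDiffOn_id.congr fun x (hx : 2 * R < ‖x‖) => hFid x hx.le)
  have hφ0 : ∀ x, φ x ≠ 0 := by
    intro x hx
    have := happ x
    rw [hx, dist_zero_left] at this
    exact lt_irrefl _ this
  refine no_retraction (M := 3 * R) (by positivity) (r := fun x => (3 * R * ‖φ x‖⁻¹) • φ x) ?_ ?_ ?_
  · exact (contDiff_const.mul ((hφ.norm ℝ hφ0).inv fun x => norm_ne_zero_iff.2 (hφ0 x))).smul hφ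
  · intro x
    have := norm_ne_zero_iff.2 (hφ0 x)
    rw [norm_smul, Real.norm_of_nonneg (by positivity)]
    field_simp
  · intro x hx
    have h1 : φ x = x := (hφS hx.ge).trans (hFid x (by linarith))
    have : (3 * R) ≠ 0 := by positivity
    simp only [h1, hx]
    rw [mul_inv_cancel₀ this, one_smul]

end Brouwer

/-- The Poincaré–Miranda theorem on the unit cube. A zero of `F` is obtained as a fixed point of
`t ↦ c (t - F t)`, where `c` clips every coordinate to `[0, 1]`. -/
theorem poincare_miranda {p : ℕ} {F : (Fin p → ℝ) → Fin p → ℝ} (hF : Continuous F)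
    (h0 : ∀ t, (∀ i, t i ∈ Icc (0 : ℝ) 1) → ∀ i, t i = 0 → F t i ≤ 0)
    (h1 : ∀ t, (∀ i, t i ∈ Icc (0 : ℝ) 1) → ∀ i, t i = 1 → 0 ≤ F t i) :
    ∃ t, (∀ i, t i ∈ Icc (0 : ℝ) 1) ∧ ∀ i, F t i = 0 := by
  let c : (Fin p → ℝ) → Fin p → ℝ := fun t i => max 0 (min 1 (t i))
  have hc : Continuous c := by fun_prop
  have hcm : ∀ t i, c t i ∈ Icc (0 : ℝ) 1 := fun t i =>
    ⟨le_max_left _ _, max_le zero_le_one (min_le_left _ _)⟩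
  let f : EuclideanSpace ℝ (Fin p) → EuclideanSpace ℝ (Fin p) := fun x =>
    WithLp.toLp 2 (c (x.ofLp - F (c x.ofLp)))
  have hf : Continuous f := by
    have : Continuous fun x : EuclideanSpace ℝ (Fin p) => c (x.ofLp - F (c x.ofLp)) := by
      fun_prop
    fun_prop
  obtain ⟨x, hx⟩ := exists_fixedPoint (R := √p + 1) (by positivity) hf (by
    intro x
    rw [EuclideanSpace.norm_eq]
    refine le_trans (Real.sqrt_le_sqrt (y := p) ?_) (by linarith)
    calc _ ≤ ∑ i : Fin p, (1 : ℝ) := Finset.sum_le_sum fun i _ => by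
            have := hcm (x.ofLp - F (c x.ofLp)) i
            simp only [f, Real.norm_eq_abs, sq_abs]
            nlinarith [this.1, this.2]
      _ = p := by simp)
  have hxc : c (x.ofLp - F (c x.ofLp)) = x.ofLp := congrArg WithLp.ofLp hx
  have hmem : ∀ i, x.ofLp i ∈ Icc (0 : ℝ) 1 := fun i => by
    rw [← hxc]; exact hcm _ i
  have hcx : c x.ofLp = x.ofLp := by
    ext i
    simp only [c]
    rw [min_eq_right (hmem i).2, max_eq_right (hmem i).1]
  rw [hcx] at hxc
  refine ⟨x.ofLp, hmem, fun i => ?_⟩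
  have hi : max 0 (min 1 (x.ofLp i - F x.ofLp i)) = x.ofLp i := congrFun hxc i
  have hm := hmem i
  rcases lt_trichotomy (F x.ofLp i) 0 with hlt | heq | hgt
  · have : x.ofLp i = 1 := by
      by_contra hne
      have h2 : x.ofLp i < 1 := lt_of_le_of_ne hm.2 hne
      have h3 : x.ofLp i < min 1 (x.ofLp i - F x.ofLp i) := lt_min h2 (by linarith)
      exact absurd hi (h3.trans_le (le_max_right _ _)).ne'
    exact absurd (h1 _ hmem i this) (not_le.2 hlt)
  · exact heq
  · have : x.ofLp i = 0 := by
      by_contra hne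
      have h2 : 0 < x.ofLp i := lt_of_le_of_ne hm.1 (Ne.symm hne)
      have h3 : max 0 (min 1 (x.ofLp i - F x.ofLp i)) < x.ofLp i :=
        max_lt h2 ((min_le_right _ _).trans_lt (by linarith))
      exact h3.ne hi
    exact absurd (h0 _ hmem i this) (not_le.2 hgt)

/-! ### Interpolating multipliers over the cube -/

lemma convex_mpvcWeakMult {n l m p : ℕ} (f : Rn n → ℝ) (g : Fin l → Rn n → ℝ)
    (h : Fin m → Rn n → ℝ) (G H : Fin p → Rn n → ℝ) (xb : Rn n) :
    Convex ℝ {z : (Fin l → ℝ) × (Fin m → ℝ) × (Fin p → ℝ) × (Fin p → ℝ) |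
      MpvcWeakMult f g h G H xb z.1 z.2.1 z.2.2.1 z.2.2.2} := by
  rintro ⟨l₁, e₁, m₁, n₁⟩ ⟨s₁, a₁, b₁, c₁, d₁, k₁, r₁⟩ ⟨l₂, e₂, m₂, n₂⟩
    ⟨s₂, a₂, b₂, c₂, d₂, k₂, r₂⟩ u v hu hv huv
  simp only at *
  refine ⟨?_, fun i hi => ?_, fun i hi => ?_, fun i hi => ?_, fun i hi => ?_, fun i hi => ?_,
    fun i hi hi' => ?_⟩ <;>
    simp only [Prod.smul_mk, Prod.mk_add_mk, Pi.add_apply, Pi.smul_apply, smul_eq_mul]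
  · have h1 := congrArg₂ (fun y z => u • y + v • z) s₁ s₂
    simp only [smul_zero, add_zero] at h1
    rw [← h1]
    simp only [add_smul, mul_smul, Finset.sum_add_distrib, ← Finset.smul_sum]
    have h2 : gradient f xb = u • gradient f xb + v • gradient f xb := by
      rw [← add_smul, huv, one_smul]
    nth_rewrite 1 [h2]
    module
  · have := a₁ i hi; have := a₂ i hi; positivity
  · rw [b₁ i hi, b₂ i hi]; simp
  · rw [c₁ i hi, c₂ i hi]; simp
  · have := d₁ i hi; have := d₂ i hi; positivity
  · rw [k₁ i hi, k₂ i hi]; simp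
  · have := r₁ i hi hi'; have := r₂ i hi hi'; positivity

/-- The multilinear interpolation weight of the vertex `α` of the cube at the point `t`; the value
`true` of `α i` stands for the coordinate `1`. -/
def cubeWeight {p : ℕ} (t : Fin p → ℝ) (α : Fin p → Bool) : ℝ :=
  ∏ i, if α i then t i else 1 - t i

lemma sum_cubeWeight {p : ℕ} (t : Fin p → ℝ) : ∑ α, cubeWeight t α = 1 := by
  have h := Finset.prod_univ_sum (fun _ : Fin p => (Finset.univ : Finset Bool))
    (fun i b => if b then t i else 1 - t i)
  simp only [Fintype.piFinset_univ] at h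
  unfold cubeWeight
  rw [← h]
  simp

lemma cubeWeight_nonneg {p : ℕ} {t : Fin p → ℝ} (ht : ∀ i, t i ∈ Icc (0 : ℝ) 1)
    (α : Fin p → Bool) : 0 ≤ cubeWeight t α := by
  refine Finset.prod_nonneg fun i _ => ?_
  have := ht i
  split_ifs
  · exact this.1
  · linarith [this.2]

lemma cubeWeight_eq_zero_of_zero {p : ℕ} {t : Fin p → ℝ} {i : Fin p} (ht : t i = 0)
    {α : Fin p → Bool} (hα : α i = true) : cubeWeight t α = 0 :=
  Finset.prod_eq_zero (Finset.mem_univ i) (by simp [hα, ht])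

lemma cubeWeight_eq_zero_of_one {p : ℕ} {t : Fin p → ℝ} {i : Fin p} (ht : t i = 1)
    {α : Fin p → Bool} (hα : α i = false) : cubeWeight t α = 0 :=
  Finset.prod_eq_zero (Finset.mem_univ i) (by simp [hα, ht])

@[fun_prop]
lemma continuous_cubeWeight {p : ℕ} (α : Fin p → Bool) :
    Continuous fun t : Fin p → ℝ => cubeWeight t α := by
  unfold cubeWeight
  refine continuous_finsetProd _ fun i _ => ?_
  split_ifs <;> fun_prop

/-- `A_α`-stationarity for all `α` implies `C_d`-stationarity: the Poincaré–Miranda theorem is applied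
to the multilinear interpolation of the `A_α`-multipliers. -/
lemma cStat_of_forall_aStat {n l m p : ℕ} {f : Rn n → ℝ} {g : Fin l → Rn n → ℝ}
    {h : Fin m → Rn n → ℝ} {G H : Fin p → Rn n → ℝ} {xb : Rn n}
    (hA : ∀ α : Fin p → ℝ, IsBinaryVec α → MpvcAStat f g h G H xb α)
    {d : Fin p → ℝ} (hd : IsUnitIntervalVec d) : MpvcCStat f g h G H xb d := by
  classical
  have hA' : ∀ α : Fin p → Bool,
      ∃ z : (Fin l → ℝ) × (Fin m → ℝ) × (Fin p → ℝ) × (Fin p → ℝ),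
        MpvcWeakMult f g h G H xb z.1 z.2.1 z.2.2.1 z.2.2.2 ∧
        (∀ i, G i xb = 0 → H i xb = 0 → α i = false → z.2.2.1 i = 0) ∧
        (∀ i, G i xb = 0 → H i xb = 0 → α i = true → 0 ≤ z.2.2.2 i) := by
    intro α
    obtain ⟨lam, eta, mu, nu, hw, h0, h1⟩ := hA (fun i => if α i then 1 else 0)
      (fun i => by by_cases hi : α i = true <;> simp [hi])
    exact ⟨⟨lam, eta, mu, nu⟩, hw, fun i hG hH hi => h0 i hG hH (by simp [hi]),
      fun i hG hH hi => h1 i hG hH (by simp [hi])⟩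
  choose z hz hz0 hz1 using hA'
  let Z : (Fin p → ℝ) → (Fin l → ℝ) × (Fin m → ℝ) × (Fin p → ℝ) × (Fin p → ℝ) :=
    fun t => ∑ α, cubeWeight t α • z α
  have hZ : Continuous Z := by fun_prop
  have hZmu : ∀ t i, (Z t).2.2.1 i = ∑ α, cubeWeight t α * (z α).2.2.1 i := by
    intro t i
    simp [Z, Prod.fst_sum, Prod.snd_sum]
  have hZnu : ∀ t i, (Z t).2.2.2 i = ∑ α, cubeWeight t α * (z α).2.2.2 i := by
    intro t i
    simp [Z, Prod.snd_sum]
  have hmupos : ∀ α i, G i xb = 0 → H i xb = 0 → 0 ≤ (z α).2.2.1 i := fun α i hG hH =>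
    (hz α).2.2.2.2.1 i (Or.inr ⟨hG, hH⟩)
  -- indices that are not biactive carry no condition, so `F` is set to `0` there
  let F : (Fin p → ℝ) → Fin p → ℝ := fun t i =>
    if G i xb = 0 ∧ H i xb = 0 then
      min ((Z t).2.2.1 i) ((1 - d i) * (Z t).2.2.1 i + d i * (Z t).2.2.2 i) else 0
  have hF : Continuous F := by
    refine continuous_pi fun i => ?_
    by_cases hi : G i xb = 0 ∧ H i xb = 0
    · simp only [F, if_pos hi]
      fun_prop
    · simp only [F, if_neg hi]
      fun_prop
  obtain ⟨t, ht, hFt⟩ := poincare_miranda hF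
    (by
      intro t ht i hti
      by_cases hi : G i xb = 0 ∧ H i xb = 0
      · simp only [F, if_pos hi]
        refine (min_le_left _ _).trans (le_of_eq ?_)
        rw [hZmu]
        refine Finset.sum_eq_zero fun α _ => ?_
        cases hα : α i
        · rw [hz0 α i hi.1 hi.2 hα, mul_zero]
        · rw [cubeWeight_eq_zero_of_zero hti hα, zero_mul]
      · simp [F, if_neg hi])
    (by
      intro t ht i hti
      by_cases hi : G i xb = 0 ∧ H i xb = 0
      · simp only [F, if_pos hi]
        have hmu : 0 ≤ (Z t).2.2.1 i := by
          rw [hZmu]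
          exact Finset.sum_nonneg fun α _ =>
            mul_nonneg (cubeWeight_nonneg ht α) (hmupos α i hi.1 hi.2)
        have hnu : 0 ≤ (Z t).2.2.2 i := by
          rw [hZnu]
          refine Finset.sum_nonneg fun α _ => ?_
          cases hα : α i
          · rw [cubeWeight_eq_zero_of_one hti hα, zero_mul]
          · exact mul_nonneg (cubeWeight_nonneg ht α) (hz1 α i hi.1 hi.2 hα)
        have h1 := sub_nonneg.2 (hd i).2
        have h2 := (hd i).1
        exact le_min hmu (by positivity)
      · simp [F, if_neg hi])
  refine ⟨(Z t).1, (Z t).2.1, (Z t).2.2.1, (Z t).2.2.2, ?_, fun i hG hH => ?_⟩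
  · exact (convex_mpvcWeakMult f g h G H xb).sum_mem (fun α _ => cubeWeight_nonneg ht α)
      (sum_cubeWeight t) (fun α _ => hz α)
  · have hi : min ((Z t).2.2.1 i) ((1 - d i) * (Z t).2.2.1 i + d i * (Z t).2.2.2 i) = 0 := by
      simpa only [F, if_pos (And.intro hG hH)] using hFt i
    by_cases hb : (1 - d i) * (Z t).2.2.1 i + d i * (Z t).2.2.2 i = 0
    · right; linarith
    · left
      rcases min_eq_iff.1 hi with ⟨h1, h2⟩ | ⟨h1, -⟩
      · rw [h1, mul_zero, zero_add] at hb h2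
        exact ⟨h1, (pos_of_mul_pos_right (lt_of_le_of_ne h2 (Ne.symm hb)) (hd i).1).le⟩
      · exact absurd h1 hb

/-- A_α-stationarity for all α ∈ {0,1}^p implies C_d-stationarity
for all d ∈ [0,1]^p and P_α-stationarity for all α ∈ {0,1}^p. -/
theorem mpvc_AStat_all_implies_CStat_and_PStat {n l m p : ℕ} (f : Rn n → ℝ) (g : Fin l → Rn n → ℝ)
    (h : Fin m → Rn n → ℝ) (G H : Fin p → Rn n → ℝ) (xb : Rn n)
    (hf : Differentiable ℝ f) (hg : ∀ i, Differentiable ℝ (g i))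
    (hh : ∀ i, Differentiable ℝ (h i)) (hG : ∀ i, Differentiable ℝ (G i))
    (hH : ∀ i, Differentiable ℝ (H i))
    (hfeas : xb ∈ MpvcFeasible g h G H)
    (hA : ∀ α : Fin p → ℝ, IsBinaryVec α → MpvcAStat f g h G H xb α) :
    (∀ d : Fin p → ℝ, IsUnitIntervalVec d → MpvcCStat f g h G H xb d) ∧
    (∀ α : Fin p → ℝ, IsBinaryVec α → MpvcPStat f g h G H xb α) := by
  have hC : ∀ d : Fin p → ℝ, IsUnitIntervalVec d → MpvcCStat f g h G H xb d :=
    fun d hd => cStat_of_forall_aStat hA hd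
  refine ⟨hC, fun α hα => ?_⟩
  obtain ⟨lam, eta, mu, nu, hw, hc⟩ := hC α fun i => by
    rcases hα i with hi | hi <;> simp [hi]
  refine ⟨lam, eta, mu, nu, hw, fun i hGi hHi hi => ?_, fun i hGi hHi hi => ?_⟩
  · rcases hc i hGi hHi with h1 | h1
    · exact h1.1
    · simpa [hi] using h1
  · rcases hc i hGi hHi with h1 | h1
    · exact Or.inl h1
    · right
      simpa [hi] using h1
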